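/- Let A be a commutative ring with 2-torsion ideal A[2], and n ≥ 1. Let P be the polynomial ring over A in the coordinates of sp_{2n} (the entries aᵢⱼ of an n×n block A-matrix and the entries bᵢⱼ (i ≤ j), cᵢⱼ (i ≤ j) of two symmetric n×n blocks, parametrizing the generic matrix M = [[A, B], [C, −Aᵀ]]). Let I ⊆ P be the subring of Sp_{2n}-invariant polynomials, i.e. those f such that for every commutative A-algebra R, every P₀ ∈ Sp_{2n}(R) and every point v of sp_{2n}(R), f evaluated at the coordinates of P₀ M(v) P₀⁻¹ equals f(v). Let ρ : P → A[X₁, …, Xₙ] be the restriction to the diagonal torus, obtained by substituting A = diag(X₁, …, Xₙ) and B = C = 0. Then ρ restricted to I is injective, its image is contained in the ring of invariants of A[X₁, …, Xₙ] under the hyperoctahedral Weyl group W = (ℤ/2)ⁿ ⋊ Sₙ (generated by permutations of the Xᵢ and the sign changes Xᵢ ↦ −Xᵢ), and ρ(I) equals the full ring of W-invariants if and only if A[2] = 0. That is, the Chevalley morphism 𝔱/W → sp_{2n}/Sp_{2n} is an isomorphism if and only if A has no 2-torsion. -/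

import Mathlib

open Matrix MvPolynomial

universe u

/-- Coordinates of `sp_{2n}`: the entries `aᵢⱼ` of the `A`-block, and the entries
`bᵢⱼ` (`i ≤ j`) and `cᵢⱼ` (`i ≤ j`) — indexed by unordered pairs — of the two symmetric
blocks `B` and `C` of the generic matrix `M = [[A, B], [C, −Aᵀ]]`. -/
abbrev SpCoord (n : ℕ) : Type :=
  (Fin n × Fin n) ⊕ (Sym2 (Fin n) ⊕ Sym2 (Fin n))

/-- The generic symplectic matrix `M(v) = [[A, B], [C, −Aᵀ]]` with entries given by a
point `v` of coordinates valued in a commutative ring `R`. -/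
noncomputable def genSpMatrix {R : Type*} [CommRing R] (n : ℕ) (v : SpCoord n → R) :
    Matrix (Fin n ⊕ Fin n) (Fin n ⊕ Fin n) R :=
  Matrix.fromBlocks
    (Matrix.of fun i j => v (Sum.inl (i, j)))
    (Matrix.of fun i j => v (Sum.inr (Sum.inl s(i, j))))
    (Matrix.of fun i j => v (Sum.inr (Sum.inr s(i, j))))
    (-(Matrix.of fun i j => v (Sum.inl (i, j)))ᵀ)

/-- A polynomial `f` on `sp_{2n}` over `A` is `Sp_{2n}`-invariant if for every commutative
`A`-algebra `R`, every symplectic `P` (`Pᵀ J P = J`) and all coordinate points `v, w` with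
`M(w) = P · M(v) · P⁻¹`, one has `f(w) = f(v)`. -/
def IsSpInvariant {A : Type u} [CommRing A] {n : ℕ}
    (f : MvPolynomial (SpCoord n) A) : Prop :=
  ∀ (R : Type u) [CommRing R] [Algebra A R]
    (P : Matrix (Fin n ⊕ Fin n) (Fin n ⊕ Fin n) R),
    Pᵀ * Matrix.fromBlocks 0 1 (-1) 0 * P = Matrix.fromBlocks 0 1 (-1) 0 →
    ∀ v w : SpCoord n → R,
      genSpMatrix n w = P * genSpMatrix n v * P⁻¹ →
      aeval w f = aeval v f

/-- Restriction to the Lie algebra of the diagonal maximal torus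
`diag(X₁, …, Xₙ, −X₁, …, −Xₙ)`: substitute `aᵢⱼ ↦ δᵢⱼ Xᵢ`, `b ↦ 0`, `c ↦ 0`. -/
noncomputable def restrictToTorus {A : Type u} [CommRing A] {n : ℕ}
    (f : MvPolynomial (SpCoord n) A) : MvPolynomial (Fin n) A :=
  aeval (fun s : SpCoord n =>
    match s with
    | Sum.inl (i, j) => if i = j then (X i : MvPolynomial (Fin n) A) else 0
    | Sum.inr _ => 0) f

/-- Invariance under the hyperoctahedral Weyl group `W = (ℤ/2)ⁿ ⋊ Sₙ`, generated by the
permutations of the variables and the sign changes `Xᵢ ↦ −Xᵢ`. -/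
def IsHyperoctahedralInvariant {A : Type u} [CommRing A] {n : ℕ}
    (p : MvPolynomial (Fin n) A) : Prop :=
  (∀ σ : Equiv.Perm (Fin n), rename σ p = p) ∧
  (∀ i : Fin n,
    aeval (fun l : Fin n =>
      if l = i then -(X l : MvPolynomial (Fin n) A) else X l) p = p)

/-!
Conjugating by a one-parameter subgroup of the torus contracts the Borel subalgebra onto the torus,
so the value of an invariant at a Borel point depends only on the diagonal. Let `M ∈ sp_{2n}` have
a cyclic vector `c` and characteristic polynomial `∏ᵢ (X² - tᵢ²)`. The vectors
`∏ᵢ (M + tᵢ) ∏_{i < k} (M - tᵢ) c`, `k < n`, are then a basis of a Lagrangian on which `M` is lower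
triangular with diagonal `t`; completing it to a symplectic basis conjugates `M` into the Borel
subalgebra, so an invariant takes at `M` the value of its restriction at `t`.

*Injectivity.* In the formal neighbourhood of a regular nilpotent the generic matrix has a cyclic
vector, and its characteristic polynomial, being even, acquires the required form after an injective
base change. A polynomial is determined by its values in this neighbourhood.

*Torsion obstruction.* The matrix `[[0, 1], [x², 0]]`, embedded through a long root, is conjugate to
`[[x, 1], [0, -x]]`. Hence the restriction of an invariant to a coordinate axis is a polynomial in
`x²`, whereas `a ∑ᵢ Xᵢ` with `2a = 0` is invariant under the Weyl group.

*Surjectivity.* Without `2`-torsion, invariance under sign changes forces all exponents to be even,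
so Weyl invariants are polynomials in the elementary symmetric polynomials of the `Xᵢ²`, which are
up to sign the restrictions of the coefficients of the characteristic polynomial.
-/

open LieAlgebra.Symplectic (sp)
open scoped Polynomial

section Symplectic

variable {l R : Type*} [DecidableEq l] [Fintype l] [CommRing R]

lemma mem_symplecticGroup_iff_neg_J {P : Matrix (l ⊕ l) (l ⊕ l) R} :
    P ∈ symplecticGroup l R ↔
      Pᵀ * fromBlocks 0 1 (-1) 0 * P = fromBlocks 0 1 (-1) 0 := by
  have neg_J_eq : (fromBlocks 0 1 (-1) 0 : Matrix (l ⊕ l) (l ⊕ l) R) = -J l R := by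
    simp [J, fromBlocks_neg]
  rw [SymplecticGroup.mem_iff', neg_J_eq, Matrix.mul_neg, Matrix.neg_mul, neg_inj]

lemma mem_sp_iff {M : Matrix (l ⊕ l) (l ⊕ l) R} :
    M ∈ sp l R ↔ Mᵀ * J l R = J l R * -M := by
  rw [sp, mem_skewAdjointMatricesLieSubalgebra, mem_skewAdjointMatricesSubmodule,
    Matrix.IsSkewAdjoint, Matrix.IsAdjointPair]

lemma fromBlocks_mem_sp_iff {a b c d : Matrix l l R} :
    fromBlocks a b c d ∈ sp l R ↔ b.IsSymm ∧ c.IsSymm ∧ d = -aᵀ := by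
  simp only [mem_sp_iff, J, fromBlocks_transpose, fromBlocks_neg, fromBlocks_multiply,
    fromBlocks_inj, Matrix.mul_zero, Matrix.mul_one, Matrix.zero_mul, Matrix.one_mul,
    Matrix.mul_neg, Matrix.neg_mul, neg_neg, neg_zero, zero_add, add_zero, neg_inj, IsSymm]
  constructor
  · rintro ⟨hc, hd, -, hb⟩
    exact ⟨hb, hc, hd.symm⟩
  · rintro ⟨hb, hc, rfl⟩
    simp [hb, hc]

lemma mem_sp_of_mul_eq_mul {M P Y : Matrix (l ⊕ l) (l ⊕ l) R} (hM : M ∈ sp l R)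
    (hP : P ∈ symplecticGroup l R) (h : M * P = P * Y) : Y ∈ sp l R := by
  rw [mem_sp_iff] at hM ⊢
  rw [SymplecticGroup.mem_iff'] at hP
  calc Yᵀ * J l R = (P * Y)ᵀ * J l R * P := by
        rw [transpose_mul, Matrix.mul_assoc, Matrix.mul_assoc, ← Matrix.mul_assoc Pᵀ, hP]
    _ = Pᵀ * (Mᵀ * J l R) * P := by
        rw [← h, transpose_mul]; simp only [Matrix.mul_assoc]
    _ = -(Pᵀ * J l R * (M * P)) := by
        rw [hM]; simp only [Matrix.mul_assoc, Matrix.mul_neg, Matrix.neg_mul]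
    _ = J l R * -Y := by
        rw [h, ← Matrix.mul_assoc, hP, Matrix.mul_neg]

lemma transpose_aeval_mul_J {M : Matrix (l ⊕ l) (l ⊕ l) R} (hM : M ∈ sp l R) (p : R[X]) :
    (Polynomial.aeval M p)ᵀ * J l R = J l R * Polynomial.aeval (-M) p := by
  induction p using Polynomial.induction_on' with
  | add p q hp hq => simp only [map_add, transpose_add, Matrix.add_mul, Matrix.mul_add, hp, hq]
  | monomial k a =>
    have semiconj : SemiconjBy (J l R) (-M) Mᵀ := (mem_sp_iff.1 hM).symm
    simp only [Polynomial.aeval_monomial, Algebra.algebraMap_eq_smul_one, smul_mul_assoc, one_mul,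
      transpose_smul, transpose_pow, Matrix.mul_smul, (semiconj.pow_right k).eq]

lemma charpoly_neg {ι : Type*} [DecidableEq ι] [Fintype ι] (M : Matrix ι ι R) :
    (-M).charpoly = (-1) ^ Fintype.card ι * M.charpoly.comp (-Polynomial.X) := by
  have charmatrix_neg :
      (-M).charmatrix = -(Polynomial.compRingHom (-Polynomial.X)).mapMatrix M.charmatrix := by
    ext1 i j
    by_cases h : i = j
    · subst h; simp; ring
    · simp [h]
  rw [charpoly, charmatrix_neg, det_neg, ← RingHom.map_det]
  rfl

lemma charpoly_comp_neg_X_of_mem_sp {M : Matrix (l ⊕ l) (l ⊕ l) R} (hM : M ∈ sp l R) :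
    M.charpoly.comp (-Polynomial.X) = M.charpoly := by
  obtain ⟨u, hu⟩ := (isUnit_iff_isUnit_det _).2 (isUnit_det_J l R)
  have transpose_eq_conj : Mᵀ = u * -M * (u : Matrix (l ⊕ l) (l ⊕ l) R)⁻¹ := by
    rw [← coe_units_inv, Units.eq_mul_inv_iff_mul_eq, hu, mem_sp_iff.1 hM]
  calc M.charpoly.comp (-Polynomial.X) = (-M).charpoly := by
        simp [charpoly_neg, ← two_mul]
    _ = Mᵀ.charpoly := by rw [transpose_eq_conj, charpoly_units_conj]
    _ = M.charpoly := charpoly_transpose M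

lemma exists_transpose_sub_eq_of_alternating {ι : Type*} [LinearOrder ι] {W : Matrix ι ι R}
    (hW : Wᵀ = -W) (hdiag : ∀ i, W i i = 0) : ∃ S : Matrix ι ι R, Sᵀ - S = W := by
  refine ⟨of fun i j => if i < j then -W i j else 0, ?_⟩
  ext i j
  have hWij : W j i = -W i j := congrFun (congrFun hW i) j
  rcases lt_trichotomy i j with h | rfl | h
  · simp [h, h.not_gt]
  · simp [hdiag]
  · simp [h, h.not_gt, hWij]

lemma transpose_pairing_J {ι κ : Type*} (E : Matrix (l ⊕ l) ι R) (F : Matrix (l ⊕ l) κ R) :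
    (Eᵀ * J l R * F)ᵀ = -(Fᵀ * J l R * E) := by
  simp [transpose_mul, J_transpose, Matrix.mul_assoc]

lemma pairing_J_self_apply_self {ι : Type*} (F : Matrix (l ⊕ l) ι R) (i : ι) :
    (Fᵀ * J l R * F) i i = 0 := by
  rw [Matrix.mul_assoc]
  simp [Matrix.mul_apply, J, one_apply, mul_comm]

-- `J Gᵀ` pairs correctly with `E`; adding `E S` for a suitable `S` makes it isotropic.
lemma exists_fromCols_mem_symplecticGroup {l : Type*} [Fintype l] [LinearOrder l]
    {E : Matrix (l ⊕ l) l R}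
    {G : Matrix l (l ⊕ l) R} (hE : Eᵀ * J l R * E = 0) (hG : G * E = 1) :
    ∃ F : Matrix (l ⊕ l) l R, fromCols E F ∈ symplecticGroup l R := by
  set F₀ := J l R * Gᵀ with hF₀
  have hEF₀ : Eᵀ * J l R * F₀ = -1 := by
    rw [hF₀, Matrix.mul_assoc, ← Matrix.mul_assoc (J _ _), J_squared, Matrix.neg_mul,
      Matrix.one_mul, Matrix.mul_neg, ← transpose_mul, hG, transpose_one]
  obtain ⟨S, hS⟩ := exists_transpose_sub_eq_of_alternating (transpose_pairing_J F₀ F₀)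
    (pairing_J_self_apply_self F₀)
  have hEF : Eᵀ * J l R * (F₀ + E * S) = -1 := by
    rw [Matrix.mul_add, hEF₀, ← Matrix.mul_assoc, hE, Matrix.zero_mul, add_zero]
  have hFE : (F₀ + E * S)ᵀ * J l R * E = 1 := by
    rw [← neg_inj, ← transpose_pairing_J, hEF, transpose_neg, transpose_one]
  have hFF : (F₀ + E * S)ᵀ * J l R * (F₀ + E * S) = 0 := by
    calc (F₀ + E * S)ᵀ * J l R * (F₀ + E * S)
        = F₀ᵀ * J l R * F₀ + Sᵀ * (Eᵀ * J l R * F₀)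
            + (F₀ + E * S)ᵀ * J l R * E * S := by
          simp only [transpose_add, transpose_mul, Matrix.mul_add, Matrix.add_mul,
            Matrix.mul_assoc]
      _ = 0 := by
          rw [hEF₀, hFE, ← hS, Matrix.mul_neg, Matrix.mul_one, Matrix.one_mul]; abel
  refine ⟨F₀ + E * S, ?_⟩
  rw [SymplecticGroup.mem_iff', transpose_fromCols, fromRows_mul, fromRows_mul_fromCols,
    hE, hEF, hFE, hFF, J]

end Symplectic

section GenericMatrix

variable {R : Type*} [CommRing R] {n : ℕ}

lemma genSpMatrix_mem_sp (v : SpCoord n → R) : genSpMatrix n v ∈ sp (Fin n) R :=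
  fromBlocks_mem_sp_iff.2
    ⟨by ext; simp [Sym2.eq_swap], by ext; simp [Sym2.eq_swap], rfl⟩

lemma exists_genSpMatrix_eq {M : Matrix (Fin n ⊕ Fin n) (Fin n ⊕ Fin n) R}
    (hM : M ∈ sp (Fin n) R) : ∃ v, genSpMatrix n v = M := by
  rw [← fromBlocks_toBlocks M] at hM ⊢
  obtain ⟨hB, hC, hD⟩ := fromBlocks_mem_sp_iff.1 hM
  refine ⟨Sum.elim (fun ij => M.toBlocks₁₁ ij.1 ij.2) (Sum.elim
    (Sym2.lift ⟨M.toBlocks₁₂, fun i j => hB.apply j i⟩)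
    (Sym2.lift ⟨M.toBlocks₂₁, fun i j => hC.apply j i⟩)), ?_⟩
  rw [hD]
  rfl

lemma genSpMatrix_comp {S : Type*} [CommRing S] (φ : R →+* S) (v : SpCoord n → R) :
    genSpMatrix n (φ ∘ v) = (genSpMatrix n v).map φ := by
  simp only [genSpMatrix, fromBlocks_map]
  congr 1
  ext i j
  simp

/-- The point of `sp_{2n}` with matrix `diag(t₁, …, tₙ, −t₁, …, −tₙ)`. -/
def torusPoint (t : Fin n → R) : SpCoord n → R
  | Sum.inl (i, j) => diagonal t i j
  | Sum.inr _ => 0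

lemma genSpMatrix_torusPoint (t : Fin n → R) :
    genSpMatrix n (torusPoint t) = fromBlocks (diagonal t) 0 0 (-diagonal t) := by
  simp only [genSpMatrix, torusPoint]
  congr 1
  exact congrArg Neg.neg (diagonal_transpose t)

variable {A : Type u} [CommRing A] [Algebra A R]

lemma aeval_restrictToTorus (f : MvPolynomial (SpCoord n) A) (t : Fin n → R) :
    aeval t (restrictToTorus f) = aeval (torusPoint t) f := by
  rw [restrictToTorus, comp_aeval_apply]
  congr 2
  funext s
  rcases s with ⟨i, j⟩ | s
  · by_cases h : i = j <;> simp [torusPoint, h]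
  · simp [torusPoint]

lemma restrictToTorus_eq_aeval_torusPoint (f : MvPolynomial (SpCoord n) A) :
    restrictToTorus f = aeval (torusPoint X) f := by
  rw [← aeval_restrictToTorus, aeval_X_left_apply]

end GenericMatrix

section WeylGroup

variable {l R : Type*} [DecidableEq l] [Fintype l] [CommRing R]

lemma fromBlocks_zero_zero_mem_symplecticGroup {Q Q' : Matrix l l R} (h : Qᵀ * Q' = 1) :
    fromBlocks Q 0 0 Q' ∈ symplecticGroup l R :=
  SymplecticGroup.fromBlocks_mem_iff.2 ⟨by simp, by simp, by simp [h]⟩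

lemma fromBlocks_diagonal_mem_symplecticGroup {d e : l → R} (h : d * d + e * e = 1) :
    fromBlocks (diagonal d) (diagonal e) (-diagonal e) (diagonal d) ∈ symplecticGroup l R := by
  refine SymplecticGroup.fromBlocks_mem_iff.2 ⟨?_, ?_, ?_⟩
  · simp [mul_comm]
  · simp [mul_comm]
  · have hdiag : (fun i => d i * d i + e i * e i) = fun _ => 1 := h
    simp [hdiag]

end WeylGroup

namespace IsSpInvariant

variable {A : Type u} [CommRing A] {n : ℕ} {f : MvPolynomial (SpCoord n) A}
variable {R : Type u} [CommRing R] [Algebra A R]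

lemma aeval_eq_of_mul_eq_mul (hf : IsSpInvariant f)
    {P : Matrix (Fin n ⊕ Fin n) (Fin n ⊕ Fin n) R} (hP : P ∈ symplecticGroup (Fin n) R)
    {v w : SpCoord n → R} (h : genSpMatrix n w * P = P * genSpMatrix n v) :
    aeval w f = aeval v f := by
  refine hf R P (mem_symplecticGroup_iff_neg_J.1 hP) v w ?_
  rw [← h, mul_nonsing_inv_cancel_right _ _ (SymplecticGroup.symplectic_det hP)]

lemma aeval_torusPoint_comp_perm (hf : IsSpInvariant f) (t : Fin n → R)
    (σ : Equiv.Perm (Fin n)) : aeval (torusPoint (t ∘ σ)) f = aeval (torusPoint t) f := by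
  have permMatrix_orthogonal : (σ.permMatrix R)ᵀ * σ.permMatrix R = 1 := by
    rw [transpose_permMatrix, ← permMatrix_mul, mul_inv_cancel, permMatrix_one]
  have diagonal_mul_permMatrix :
      diagonal (t ∘ σ) * σ.permMatrix R = σ.permMatrix R * diagonal t := by
    ext i j
    rw [diagonal_mul, mul_diagonal]
    by_cases h : σ i = j <;> simp [PEquiv.toMatrix_apply, h]
  refine hf.aeval_eq_of_mul_eq_mul
    (fromBlocks_zero_zero_mem_symplecticGroup permMatrix_orthogonal) ?_
  simp only [genSpMatrix_torusPoint, fromBlocks_multiply, diagonal_mul_permMatrix,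
    Matrix.mul_zero, Matrix.zero_mul, Matrix.neg_mul, Matrix.mul_neg, add_zero, zero_add,
    neg_zero]

lemma aeval_torusPoint_sign (hf : IsSpInvariant f) (t : Fin n → R) (i : Fin n) :
    aeval (torusPoint fun j => if j = i then -t j else t j) f = aeval (torusPoint t) f := by
  set d : Fin n → R := fun j => if j = i then 0 else 1 with hd
  set e : Fin n → R := fun j => if j = i then 1 else 0 with he
  set t' : Fin n → R := fun j => if j = i then -t j else t j with ht'
  have sum_squares : d * d + e * e = 1 := by
    ext j
    by_cases h : j = i <;> simp [hd, he, h]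
  have conj_d : diagonal t' * diagonal d = diagonal d * diagonal t := by
    rw [diagonal_mul_diagonal, diagonal_mul_diagonal]
    congr 1 with j
    by_cases h : j = i <;> simp [hd, ht', h]
  have conj_e : diagonal t' * diagonal e = -(diagonal e * diagonal t) := by
    rw [diagonal_mul_diagonal, diagonal_mul_diagonal, diagonal_neg]
    congr 1 with j
    by_cases h : j = i <;> simp [he, ht', h]
  refine hf.aeval_eq_of_mul_eq_mul (fromBlocks_diagonal_mem_symplecticGroup sum_squares) ?_
  simp only [genSpMatrix_torusPoint, fromBlocks_multiply, conj_d, conj_e, Matrix.mul_zero,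
    Matrix.zero_mul, Matrix.neg_mul, Matrix.mul_neg, add_zero, zero_add, neg_zero, neg_neg]

theorem isHyperoctahedralInvariant_restrictToTorus (hf : IsSpInvariant f) :
    IsHyperoctahedralInvariant (restrictToTorus f) := by
  constructor
  · intro σ
    rw [← aeval_X_left_apply (rename σ _), aeval_rename, aeval_restrictToTorus,
      hf.aeval_torusPoint_comp_perm, ← restrictToTorus_eq_aeval_torusPoint]
  · intro i
    rw [aeval_restrictToTorus, hf.aeval_torusPoint_sign,
      ← restrictToTorus_eq_aeval_torusPoint]

end IsSpInvariant

section Contraction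

variable {R : Type*} [CommRing R] {n : ℕ}

/-- The points of `sp_{2n}` that lie in the Borel subalgebra where the block `A` is lower
triangular and `C = 0`. -/
def IsBorelPoint (v : SpCoord n → R) : Prop :=
  (∀ i j, i < j → v (Sum.inl (i, j)) = 0) ∧ ∀ s, v (Sum.inr (Sum.inr s)) = 0

/-- The conjugate of a Borel point by the torus element with entries `X, X², …, Xⁿ`. Its
coordinates are polynomial in `X`, and at `X = 0` it degenerates to the diagonal part. The
truncated subtraction is harmless because `aᵢⱼ = 0` for `i < j` on the Borel subalgebra. -/
noncomputable def contractedPoint (v : SpCoord n → R) : SpCoord n → R[X]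
  | Sum.inl (i, j) => Polynomial.C (v (Sum.inl (i, j))) * Polynomial.X ^ ((i : ℕ) - j)
  | Sum.inr (Sum.inl s) => Polynomial.C (v (Sum.inr (Sum.inl s))) *
      Polynomial.X ^ Sym2.lift ⟨fun i j : Fin n => (i + 1 + (j + 1) : ℕ), fun _ _ => add_comm _ _⟩ s
  | Sum.inr (Sum.inr _) => 0

open LaurentPolynomial (T)

lemma IsBorelPoint.toLaurent_contractedPoint_inl {v : SpCoord n → R} (hv : IsBorelPoint v)
    (i j : Fin n) : (contractedPoint v (Sum.inl (i, j))).toLaurent =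
      LaurentPolynomial.C (v (Sum.inl (i, j))) * T ((i : ℤ) - j) := by
  rcases lt_or_ge i j with h | h
  · simp [contractedPoint, hv.1 i j h]
  · rw [contractedPoint, Polynomial.toLaurent_C_mul_X_pow, Nat.cast_sub (Fin.le_def.1 h)]

lemma IsBorelPoint.genSpMatrix_contractedPoint_mul {v : SpCoord n → R} (hv : IsBorelPoint v) :
    letI P : Matrix (Fin n ⊕ Fin n) (Fin n ⊕ Fin n) (LaurentPolynomial R) :=
      fromBlocks (diagonal fun i => T (i + 1)) 0 0 (diagonal fun i => T (-(i + 1)))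
    genSpMatrix n (Polynomial.toLaurent ∘ contractedPoint v) * P =
      P * genSpMatrix n (LaurentPolynomial.C ∘ v) := by
  simp only [genSpMatrix, fromBlocks_multiply, Matrix.mul_zero, Matrix.zero_mul, add_zero,
    zero_add, Function.comp_apply, hv.toLaurent_contractedPoint_inl]
  congr 1 <;> ext1 i j <;> simp only [mul_diagonal, diagonal_mul, of_apply,
    Matrix.neg_apply, transpose_apply]
  · rw [mul_assoc, ← LaurentPolynomial.T_add, mul_comm]
    congr 2
    ring
  · rw [contractedPoint, Polynomial.toLaurent_C_mul_X_pow, mul_assoc, ← LaurentPolynomial.T_add,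
      mul_comm]
    congr 2
    simp only [Sym2.lift_mk]
    push_cast
    ring
  · simp [contractedPoint, hv.2]
  · rw [neg_mul, mul_neg, mul_assoc, ← LaurentPolynomial.T_add, mul_comm]
    congr 3
    ring

lemma IsBorelPoint.eval_zero_contractedPoint {v : SpCoord n → R} (hv : IsBorelPoint v) :
    Polynomial.eval 0 ∘ contractedPoint v = torusPoint fun i => v (Sum.inl (i, i)) := by
  funext s
  rcases s with ⟨i, j⟩ | s | s
  · rcases lt_trichotomy i j with h | rfl | h
    · simp [contractedPoint, torusPoint, hv.1 i j h, h.ne]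
    · simp [contractedPoint, torusPoint]
    · simp [contractedPoint, torusPoint, h.ne', Nat.sub_ne_zero_of_lt (Fin.lt_def.1 h)]
  · induction s with
    | _ i j => simp [contractedPoint, torusPoint]
  · simp [contractedPoint, torusPoint]

end Contraction

namespace IsSpInvariant

variable {A : Type u} [CommRing A] {n : ℕ} {f : MvPolynomial (SpCoord n) A}
variable {R : Type u} [CommRing R] [Algebra A R]

open LaurentPolynomial (T)

lemma aeval_contractedPoint (hf : IsSpInvariant f) {v : SpCoord n → R} (hv : IsBorelPoint v) :
    aeval (contractedPoint v) f = Polynomial.C (aeval v f) := by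
  let toLaurent : R[X] →ₐ[A] LaurentPolynomial R := Polynomial.toLaurentAlg.restrictScalars A
  have torus_mem : fromBlocks (diagonal fun i : Fin n => T ((i : ℤ) + 1)) 0 0
      (diagonal fun i : Fin n => T (-((i : ℤ) + 1))) ∈
        symplecticGroup (Fin n) (LaurentPolynomial R) := by
    refine fromBlocks_zero_zero_mem_symplecticGroup ?_
    rw [diagonal_transpose, diagonal_mul_diagonal]
    simp only [← LaurentPolynomial.T_add, add_neg_cancel, LaurentPolynomial.T_zero, diagonal_one]
  apply Polynomial.toLaurent_injective
  calc toLaurent (aeval (contractedPoint v) f)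
      = aeval (toLaurent ∘ contractedPoint v) f := comp_aeval_apply ..
    _ = aeval (LaurentPolynomial.C ∘ v) f :=
        hf.aeval_eq_of_mul_eq_mul torus_mem hv.genSpMatrix_contractedPoint_mul
    _ = LaurentPolynomial.C (aeval v f) :=
        aeval_algebraMap_apply (LaurentPolynomial R) v f
    _ = (Polynomial.C (aeval v f)).toLaurent := (Polynomial.toLaurent_C _).symm

lemma aeval_eq_of_isBorelPoint (hf : IsSpInvariant f) {v : SpCoord n → R}
    (hv : IsBorelPoint v) :
    aeval v f = aeval (fun i => v (Sum.inl (i, i))) (restrictToTorus f) := by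
  let evalZero : R[X] →ₐ[A] R := (Polynomial.aeval (0 : R)).restrictScalars A
  calc aeval v f = evalZero (aeval (contractedPoint v) f) := by
        rw [hf.aeval_contractedPoint hv]
        exact (Polynomial.aeval_C (R := R) (0 : R) _).symm
    _ = aeval (Polynomial.eval 0 ∘ contractedPoint v) f := comp_aeval_apply ..
    _ = aeval (fun i => v (Sum.inl (i, i))) (restrictToTorus f) := by
        rw [hv.eval_zero_contractedPoint, aeval_restrictToTorus]

end IsSpInvariant

section Krylov

variable {ι κ R : Type*} [Fintype ι] [DecidableEq ι] [CommRing R]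

/-- The matrix with columns `pₖ(M) c`, for a family `p` of polynomials. -/
noncomputable def polyColumns (M : Matrix ι ι R) (c : ι → R) (p : κ → R[X]) : Matrix ι κ R :=
  of fun a k => (Polynomial.aeval M (p k) *ᵥ c) a

/-- The matrix with columns `c, M c, …, M ^ (m - 1) c`. The vector `c` is cyclic for `M` exactly
when this matrix is invertible for `m` the size of `M`. -/
noncomputable def krylovMatrix (M : Matrix ι ι R) (c : ι → R) (m : ℕ) : Matrix ι (Fin m) R :=
  of fun a k => (M ^ (k : ℕ) *ᵥ c) a

lemma polyColumns_eq_krylovMatrix_mul (M : Matrix ι ι R) (c : ι → R) {m : ℕ} {p : Fin m → R[X]}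
    (hp : ∀ k, (p k).natDegree = k) :
    polyColumns M c p = krylovMatrix M c m * of fun i j : Fin m => (p j).coeff i := by
  ext a k
  have hk : (p k).natDegree < m := (hp k).trans_lt k.isLt
  rw [polyColumns, of_apply, Polynomial.aeval_eq_sum_range' hk, sum_mulVec, Finset.sum_apply,
    Matrix.mul_apply, ← Fin.sum_univ_eq_sum_range (fun i => (((p k).coeff i • M ^ i) *ᵥ c) a)]
  simp [krylovMatrix, smul_mulVec, mul_comm]

lemma exists_mul_polyColumns_eq_one {M : Matrix ι ι R} {c : ι → R} {n m : ℕ} [Nontrivial R]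
    {L : Matrix (Fin (n + m)) ι R} (hL : L * krylovMatrix M c (n + m) = 1) {p : Fin m → R[X]}
    (hmonic : ∀ k, (p k).Monic) (hdegree : ∀ k, (p k).natDegree = n + k) :
    ∃ G : Matrix (Fin m) ι R, G * polyColumns M c p = 1 := by
  set q : Fin (n + m) → R[X] := Fin.append (fun i => Polynomial.X ^ (i : ℕ)) p with hq
  set T : Matrix (Fin (n + m)) (Fin (n + m)) R := of fun i j => (q j).coeff i with hT
  have q_degree : ∀ k, (q k).natDegree = k := fun k => by
    refine Fin.addCases (fun i => ?_) (fun i => ?_) k <;> simp [hq, hdegree]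
  have q_monic : ∀ k, (q k).Monic := fun k => by
    refine Fin.addCases (fun i => ?_) (fun i => ?_) k <;>
      simp [hq, hmonic, Polynomial.monic_X_pow]
  have T_unit : IsUnit T.det := by
    rw [hT, det_matrixOfPolynomials q q_degree q_monic]
    exact isUnit_one
  have left_inverse : T⁻¹ * L * polyColumns M c q = 1 := by
    rw [polyColumns_eq_krylovMatrix_mul M c q_degree, Matrix.mul_assoc, ← Matrix.mul_assoc L, hL,
      Matrix.one_mul, nonsing_inv_mul _ T_unit]
  have columns_eq : polyColumns M c p = (polyColumns M c q).submatrix id (Fin.natAdd n) := by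
    ext a k
    simp [polyColumns, hq]
  refine ⟨(T⁻¹ * L).submatrix (Fin.natAdd n) id, ?_⟩
  rw [columns_eq, ← submatrix_mul _ _ _ _ _ Function.bijective_id, left_inverse,
    submatrix_one _ (Fin.natAdd_injective m n)]

/-- The lower triangular matrix with diagonal `t` and ones on the subdiagonal. -/
def lowerBidiagonal {n : ℕ} (t : Fin n → R) : Matrix (Fin n) (Fin n) R :=
  diagonal t + of fun i k => if i.castSucc = k.succ then 1 else 0

lemma lowerBidiagonal_apply_self {n : ℕ} (t : Fin n → R) (i : Fin n) :
    lowerBidiagonal t i i = t i := by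
  simp [lowerBidiagonal, Fin.castSucc_lt_succ.ne]

lemma lowerBidiagonal_apply_of_lt {n : ℕ} (t : Fin n → R) {i j : Fin n} (h : i < j) :
    lowerBidiagonal t i j = 0 := by
  have : i.castSucc < j.succ := (Fin.castSucc_lt_castSucc_iff.2 h).trans Fin.castSucc_lt_succ
  simp [lowerBidiagonal, h.ne, this.ne]

lemma mul_polyColumns_castSucc {n : ℕ} (M : Matrix ι ι R) (c : ι → R) {t : Fin n → R}
    {p : Fin (n + 1) → R[X]}
    (hp : ∀ k : Fin n, p k.succ = p k.castSucc * (Polynomial.X - Polynomial.C (t k)))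
    (hlast : Polynomial.aeval M (p (Fin.last n)) = 0) :
    M * polyColumns M c (p ∘ Fin.castSucc) =
      polyColumns M c (p ∘ Fin.castSucc) * lowerBidiagonal t := by
  have mul_aeval (k : Fin n) : M * Polynomial.aeval M (p k.castSucc) =
      t k • Polynomial.aeval M (p k.castSucc) + Polynomial.aeval M (p k.succ) := by
    have X_mul : Polynomial.X * p k.castSucc = Polynomial.C (t k) * p k.castSucc + p k.succ := by
      rw [hp]; ring
    simpa [Algebra.algebraMap_eq_smul_one] using congrArg (Polynomial.aeval M) X_mul
  have succ_column (a : ι) (k : Fin n) :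
      ∑ i : Fin n, (Polynomial.aeval M (p i.castSucc) *ᵥ c) a *
        (if i.castSucc = k.succ then 1 else 0) = (Polynomial.aeval M (p k.succ) *ᵥ c) a := by
    have h := Fin.sum_univ_castSucc fun j : Fin (n + 1) =>
      (Polynomial.aeval M (p j) *ᵥ c) a * (if j = k.succ then 1 else 0)
    simpa [hlast] using h.symm
  ext a k
  calc (M * polyColumns M c (p ∘ Fin.castSucc)) a k
      = ((M * Polynomial.aeval M (p k.castSucc)) *ᵥ c) a := by
        rw [← mulVec_mulVec]; rfl
    _ = (polyColumns M c (p ∘ Fin.castSucc) * lowerBidiagonal t) a k := by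
        rw [mul_aeval, add_mulVec, smul_mulVec, Pi.add_apply, ← succ_column, lowerBidiagonal,
          Matrix.mul_add, Matrix.add_apply, mul_diagonal, Pi.smul_apply, smul_eq_mul, mul_comm]
        rfl

variable {l : Type*} [Fintype l] [DecidableEq l]

lemma transpose_aeval_mul_J_mul_aeval_eq_zero {M : Matrix (l ⊕ l) (l ⊕ l) R} (hM : M ∈ sp l R)
    {p q : R[X]} (h : M.charpoly ∣ p.comp (-Polynomial.X) * q) :
    (Polynomial.aeval M p)ᵀ * J l R * Polynomial.aeval M q = 0 := by
  have aeval_neg : Polynomial.aeval (-M) p = Polynomial.aeval M (p.comp (-Polynomial.X)) := by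
    simp [Polynomial.aeval_comp]
  obtain ⟨r, hr⟩ := h
  rw [transpose_aeval_mul_J hM, aeval_neg, Matrix.mul_assoc, ← map_mul, hr, map_mul,
    aeval_self_charpoly, Matrix.zero_mul, Matrix.mul_zero]

lemma polyColumns_isotropic {M : Matrix (l ⊕ l) (l ⊕ l) R} (hM : M ∈ sp l R) (c : l ⊕ l → R)
    {p : κ → R[X]} (h : ∀ j k, M.charpoly ∣ (p j).comp (-Polynomial.X) * p k) :
    (polyColumns M c p)ᵀ * J l R * polyColumns M c p = 0 := by
  ext j k
  calc ((polyColumns M c p)ᵀ * J l R * polyColumns M c p) j k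
      = (Polynomial.aeval M (p j) *ᵥ c) ᵥ* J l R ⬝ᵥ (Polynomial.aeval M (p k) *ᵥ c) := rfl
    _ = c ⬝ᵥ ((Polynomial.aeval M (p j))ᵀ * J l R * Polynomial.aeval M (p k)) *ᵥ c := by
        rw [← vecMul_transpose, vecMul_vecMul, dotProduct_mulVec, vecMul_vecMul,
          ← dotProduct_mulVec]
    _ = 0 := by
        rw [transpose_aeval_mul_J_mul_aeval_eq_zero hM (h j k), zero_mulVec, dotProduct_zero]

end Krylov

section BorelForm

variable {R : Type*} [CommRing R] {n : ℕ}

/-- The polynomials `∏ᵢ (X + tᵢ) * ∏_{i < k} (X - tᵢ)`. For `M ∈ sp_{2n}` with characteristic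
polynomial `∏ᵢ (X² - tᵢ²)` and a cyclic vector `c`, their values at `M`, applied to `c`, span an
`M`-stable Lagrangian and exhibit a flag of it. -/
noncomputable def flagPoly (t : Fin n → R) (k : Fin (n + 1)) : R[X] :=
  (∏ i, (Polynomial.X + Polynomial.C (t i))) *
    Fin.partialProd (fun i => Polynomial.X - Polynomial.C (t i)) k

lemma flagPoly_succ (t : Fin n → R) (k : Fin n) :
    flagPoly t k.succ = flagPoly t k.castSucc * (Polynomial.X - Polynomial.C (t k)) := by
  rw [flagPoly, flagPoly, Fin.partialProd_succ, mul_assoc]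

lemma flagPoly_zero (t : Fin n → R) :
    flagPoly t 0 = ∏ i, (Polynomial.X + Polynomial.C (t i)) := by
  rw [flagPoly, Fin.partialProd_zero, mul_one]

lemma flagPoly_zero_dvd (t : Fin n → R) (k : Fin (n + 1)) : flagPoly t 0 ∣ flagPoly t k := by
  rw [flagPoly_zero]
  exact dvd_mul_right _ _

lemma flagPoly_last (t : Fin n → R) :
    flagPoly t (Fin.last n) = ∏ i, (Polynomial.X ^ 2 - Polynomial.C (t i ^ 2)) := by
  have partialProd_last : Fin.partialProd (fun i => Polynomial.X - Polynomial.C (t i))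
      (Fin.last n) = ∏ i, (Polynomial.X - Polynomial.C (t i)) := by
    rw [Fin.partialProd, Fin.val_last, List.take_of_length_le (by simp), List.prod_ofFn]
  rw [flagPoly, partialProd_last, ← Finset.prod_mul_distrib]
  refine Finset.prod_congr rfl fun i _ => ?_
  rw [Polynomial.C_pow]
  ring

lemma monic_flagPoly (t : Fin n → R) (k : Fin (n + 1)) : (flagPoly t k).Monic := by
  induction k using Fin.induction with
  | zero =>
    rw [flagPoly_zero]
    exact Polynomial.monic_prod_of_monic _ _ fun i _ => Polynomial.monic_X_add_C _
  | succ k ih =>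
    rw [flagPoly_succ]
    exact ih.mul (Polynomial.monic_X_sub_C _)

lemma natDegree_flagPoly [Nontrivial R] (t : Fin n → R) (k : Fin (n + 1)) :
    (flagPoly t k).natDegree = n + k := by
  induction k using Fin.induction with
  | zero =>
    rw [flagPoly_zero, Polynomial.natDegree_prod_of_monic _ _ fun i _ =>
      Polynomial.monic_X_add_C _]
    simp
  | succ k ih =>
    rw [flagPoly_succ, (monic_flagPoly t _).natDegree_mul (Polynomial.monic_X_sub_C _), ih,
      Polynomial.natDegree_X_sub_C, Fin.val_succ, Fin.val_castSucc, add_assoc]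

lemma flagPoly_last_dvd_comp_neg_X_mul (t : Fin n → R) (j k : Fin (n + 1)) :
    flagPoly t (Fin.last n) ∣ (flagPoly t j).comp (-Polynomial.X) * flagPoly t k := by
  have last_dvd : flagPoly t (Fin.last n) ∣
      (flagPoly t 0).comp (-Polynomial.X) * flagPoly t 0 := by
    rw [flagPoly_last, flagPoly_zero, Polynomial.prod_comp, ← Finset.prod_mul_distrib]
    refine Finset.prod_dvd_prod_of_dvd _ _ fun i _ => ⟨-1, ?_⟩
    simp only [Polynomial.add_comp, Polynomial.X_comp, Polynomial.C_comp, Polynomial.C_pow]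
    ring
  have comp_dvd : (flagPoly t 0).comp (-Polynomial.X) ∣ (flagPoly t j).comp (-Polynomial.X) :=
    map_dvd (Polynomial.compRingHom (-Polynomial.X)) (flagPoly_zero_dvd t j)
  exact last_dvd.trans (mul_dvd_mul comp_dvd (flagPoly_zero_dvd t k))

lemma exists_mul_eq_mul_fromBlocks_lowerBidiagonal [Nontrivial R]
    {M : Matrix (Fin n ⊕ Fin n) (Fin n ⊕ Fin n) R} (hM : M ∈ sp (Fin n) R) {t : Fin n → R}
    (hχ : M.charpoly = ∏ i, (Polynomial.X ^ 2 - Polynomial.C (t i ^ 2)))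
    {c : Fin n ⊕ Fin n → R} {L : Matrix (Fin (n + n)) (Fin n ⊕ Fin n) R}
    (hL : L * krylovMatrix M c (n + n) = 1) :
    ∃ P ∈ symplecticGroup (Fin n) R, ∃ B D,
      M * P = P * fromBlocks (lowerBidiagonal t) B 0 D := by
  rw [← flagPoly_last] at hχ
  set E := polyColumns M c (flagPoly t ∘ Fin.castSucc)
  have isotropic : Eᵀ * J (Fin n) R * E = 0 :=
    polyColumns_isotropic hM c fun j k => hχ ▸ flagPoly_last_dvd_comp_neg_X_mul t _ _
  have stable : M * E = E * lowerBidiagonal t :=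
    mul_polyColumns_castSucc M c (flagPoly_succ t) (by rw [← hχ, aeval_self_charpoly])
  obtain ⟨G, hG⟩ := exists_mul_polyColumns_eq_one hL (fun k => monic_flagPoly t k.castSucc)
    fun k => natDegree_flagPoly t k.castSucc
  obtain ⟨F, hP⟩ := exists_fromCols_mem_symplecticGroup isotropic hG
  set Y := (fromCols E F)⁻¹ * M * F
  have mul_F : M * F = fromCols E F * Y := by
    rw [← Matrix.mul_assoc, mul_nonsing_inv_cancel_left _ _ (SymplecticGroup.symplectic_det hP)]
  refine ⟨fromCols E F, hP, Y.toRows₁, Y.toRows₂, ?_⟩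
  rw [mul_fromCols, fromCols_mul_fromBlocks, stable, Matrix.mul_zero, add_zero,
    ← fromCols_mul_fromRows, fromRows_toRows, mul_F]

end BorelForm

namespace IsSpInvariant

variable {A : Type u} [CommRing A] {n : ℕ} {f : MvPolynomial (SpCoord n) A}
variable {R : Type u} [CommRing R] [Algebra A R]

theorem aeval_eq_aeval_restrictToTorus (hf : IsSpInvariant f) {v : SpCoord n → R} {t : Fin n → R}
    (hχ : (genSpMatrix n v).charpoly = ∏ i, (Polynomial.X ^ 2 - Polynomial.C (t i ^ 2)))
    {c : Fin n ⊕ Fin n → R} {L : Matrix (Fin (n + n)) (Fin n ⊕ Fin n) R}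
    (hL : L * krylovMatrix (genSpMatrix n v) c (n + n) = 1) :
    aeval v f = aeval t (restrictToTorus f) := by
  nontriviality R
  obtain ⟨P, hP, B, D, hMP⟩ :=
    exists_mul_eq_mul_fromBlocks_lowerBidiagonal (genSpMatrix_mem_sp v) hχ hL
  obtain ⟨w, hw⟩ := exists_genSpMatrix_eq (mem_sp_of_mul_eq_mul (genSpMatrix_mem_sp v) hP hMP)
  obtain ⟨hA, -, hC, -⟩ := fromBlocks_inj.1 hw
  have hA' (i j : Fin n) : w (Sum.inl (i, j)) = lowerBidiagonal t i j := congrFun₂ hA i j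
  have borel : IsBorelPoint w := by
    refine ⟨fun i j h => by rw [hA', lowerBidiagonal_apply_of_lt t h], fun s => ?_⟩
    induction s with
    | _ i j => exact congrFun₂ hC i j
  rw [hf.aeval_eq_of_mul_eq_mul hP (hMP.trans (by rw [hw])), hf.aeval_eq_of_isBorelPoint borel]
  simp only [hA', lowerBidiagonal_apply_self]

end IsSpInvariant

section CharpolySplitting

variable {R : Type*} [CommRing R] {n : ℕ}

-- Over a ring with `2`-torsion, evenness of the characteristic polynomial does not follow from
-- its invariance under `X ↦ -X`; it is inherited from the generic matrix over `ℤ`.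
lemma coeff_charpoly_genSpMatrix_of_odd (v : SpCoord n → R) {k : ℕ} (hk : Odd k) :
    (genSpMatrix n v).charpoly.coeff k = 0 := by
  set M := genSpMatrix n (X : SpCoord n → MvPolynomial (SpCoord n) ℤ) with hM
  have generic : M.charpoly.coeff k = 0 := by
    have h := charpoly_comp_neg_X_of_mem_sp (genSpMatrix_mem_sp (R := MvPolynomial (SpCoord n) ℤ) X)
    rw [← neg_one_mul, ← Polynomial.C_1, ← Polynomial.C_neg] at h
    have h_coeff := congrArg (Polynomial.coeff · k) h
    simp only [Polynomial.comp_C_mul_X_coeff, hk.neg_one_pow, mul_neg_one] at h_coeff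
    exact self_eq_neg.1 h_coeff.symm
  have specialize : genSpMatrix n v = M.map (eval₂Hom (Int.castRingHom R) v) := by
    rw [hM, ← genSpMatrix_comp]
    congr 1
    funext s
    simp
  rw [specialize, charpoly_map, Polynomial.coeff_map, generic, map_zero]

lemma expand_contract_charpoly_genSpMatrix (v : SpCoord n → R) :
    Polynomial.expand R 2 (Polynomial.contract 2 (genSpMatrix n v).charpoly) =
      (genSpMatrix n v).charpoly := by
  ext k
  rw [Polynomial.coeff_expand two_pos]
  split_ifs with h
  · rw [Polynomial.coeff_contract two_ne_zero, Nat.div_mul_cancel h]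
  · rw [coeff_charpoly_genSpMatrix_of_odd]
    rwa [← Nat.not_even_iff_odd, even_iff_two_dvd]

lemma exists_map_eq_X_sub_C_sq_mul {S : Type u} [CommRing S] [Nontrivial S] {q : S[X]}
    (hq : q.Monic) (hdeg : q.natDegree ≠ 0) :
    ∃ (R : Type u) (_ : CommRing R) (φ : S →+* R), Function.Injective φ ∧
      ∃ (t : R) (q' : R[X]), q'.Monic ∧
        q.map φ = (Polynomial.X - Polynomial.C (t ^ 2)) * q' := by
  set p := Polynomial.expand S 2 q with hp
  have p_monic : p.Monic := (Polynomial.monic_expand_iff two_pos).2 hq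
  have : Module.Free S (AdjoinRoot p) := p_monic.free_adjoinRoot
  have p_not_unit : ¬IsUnit p := fun h => by
    have natDegree_p : p.natDegree = q.natDegree * 2 := Polynomial.natDegree_expand 2 q
    rw [p_monic.eq_one_of_isUnit h, Polynomial.natDegree_one] at natDegree_p
    omega
  have : Nontrivial (AdjoinRoot p) := Ideal.Quotient.nontrivial_iff.mpr (by simpa)
  have root_sq : (q.map (algebraMap S (AdjoinRoot p))).IsRoot (AdjoinRoot.root p ^ 2) := by
    rw [Polynomial.IsRoot, Polynomial.eval_map_algebraMap, ← Polynomial.expand_aeval, ← hp,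
      AdjoinRoot.aeval_eq, AdjoinRoot.mk_self]
  obtain ⟨q', hq'⟩ := Polynomial.dvd_iff_isRoot.2 root_sq
  exact ⟨AdjoinRoot p, inferInstance, algebraMap S _, FaithfulSMul.algebraMap_injective S _,
    AdjoinRoot.root p, q',
    .of_mul_monic_left (Polynomial.monic_X_sub_C _) (hq' ▸ hq.map _), hq'⟩

lemma exists_map_eq_prod_X_sub_C_sq {S : Type u} [CommRing S] [Nontrivial S] {q : S[X]}
    (hq : q.Monic) (hdeg : q.natDegree = n) :
    ∃ (R : Type u) (_ : CommRing R) (φ : S →+* R), Function.Injective φ ∧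
      ∃ t : Fin n → R, q.map φ = ∏ i, (Polynomial.X - Polynomial.C (t i ^ 2)) := by
  induction n generalizing S with
  | zero =>
    refine ⟨S, inferInstance, RingHom.id S, Function.injective_id, Fin.elim0, ?_⟩
    simp [Polynomial.eq_one_of_monic_natDegree_zero hq hdeg]
  | succ n ih =>
    obtain ⟨S', _, φ, hφ, s, q', hq', hmap⟩ :=
      exists_map_eq_X_sub_C_sq_mul hq (hdeg.trans_ne n.succ_ne_zero)
    have : Nontrivial S' := hφ.nontrivial
    have natDegree_q' : q'.natDegree = n := by
      have h := hq.natDegree_map φ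
      rw [hmap, (Polynomial.monic_X_sub_C _).natDegree_mul hq', Polynomial.natDegree_X_sub_C] at h
      omega
    obtain ⟨R, _, ψ, hψ, t, ht⟩ := ih hq' natDegree_q'
    refine ⟨R, inferInstance, ψ.comp φ, hψ.comp hφ, Fin.cons (ψ s) t, ?_⟩
    rw [← Polynomial.map_map, hmap, Polynomial.map_mul, ht, Fin.prod_univ_succ]
    simp

lemma exists_charpoly_genSpMatrix_comp_eq_prod {S : Type u} [CommRing S] [Nontrivial S]
    (v : SpCoord n → S) :
    ∃ (R : Type u) (_ : CommRing R) (φ : S →+* R), Function.Injective φ ∧ ∃ t : Fin n → R,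
      (genSpMatrix n (φ ∘ v)).charpoly =
        ∏ i, (Polynomial.X ^ 2 - Polynomial.C (t i ^ 2)) := by
  have expand_contract := expand_contract_charpoly_genSpMatrix v
  set q := Polynomial.contract 2 (genSpMatrix n v).charpoly
  have q_monic : q.Monic := by
    rw [← Polynomial.monic_expand_iff two_pos, expand_contract]
    exact charpoly_monic _
  have natDegree_q : q.natDegree = n := by
    have h := Polynomial.natDegree_expand 2 q
    rw [expand_contract, charpoly_natDegree_eq_dim, Fintype.card_sum, Fintype.card_fin] at h
    omega
  obtain ⟨R, _, φ, hφ, t, ht⟩ := exists_map_eq_prod_X_sub_C_sq q_monic natDegree_q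
  refine ⟨R, inferInstance, φ, hφ, t, ?_⟩
  rw [genSpMatrix_comp, charpoly_map, ← expand_contract, Polynomial.map_expand, ht, map_prod]
  simp

end CharpolySplitting

section RegularNilpotent

variable {R : Type*} [CommRing R] {m : ℕ}

/-- A regular nilpotent element of `sp_{2n}`, `n = m + 1`: with `eᵢ`, `fᵢ` the standard symplectic
basis, its matrix acts by `e₁ ↦ e₂ ↦ ⋯ ↦ eₙ ↦ fₙ ↦ -fₙ₋₁ ↦ ⋯ ↦ ±f₁ ↦ 0`. -/
def regularNilpotent (m : ℕ) (R : Type*) [CommRing R] : SpCoord (m + 1) → R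
  | Sum.inl (i, j) => if i.castSucc = j.succ then 1 else 0
  | Sum.inr (Sum.inl _) => 0
  | Sum.inr (Sum.inr s) => if s = s(Fin.last m, Fin.last m) then 1 else 0

lemma regularNilpotent_mulVec_inl_castSucc (i : Fin m) :
    genSpMatrix (m + 1) (regularNilpotent m R) *ᵥ Pi.single (Sum.inl i.castSucc) 1 =
      Pi.single (Sum.inl i.succ) 1 := by
  ext a
  rcases a with a | a
  · simp [genSpMatrix, regularNilpotent, Pi.single_apply, Fin.ext_iff]
  · simp [genSpMatrix, regularNilpotent, i.castSucc_lt_last.ne]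

lemma regularNilpotent_mulVec_inl_last :
    genSpMatrix (m + 1) (regularNilpotent m R) *ᵥ Pi.single (Sum.inl (Fin.last m)) 1 =
      Pi.single (Sum.inr (Fin.last m)) 1 := by
  ext a
  rcases a with a | a
  · simp [genSpMatrix, regularNilpotent, (Fin.castSucc_lt_last a).ne]
  · simp [genSpMatrix, regularNilpotent, Pi.single_apply]

lemma regularNilpotent_mulVec_inr_succ (i : Fin m) :
    genSpMatrix (m + 1) (regularNilpotent m R) *ᵥ Pi.single (Sum.inr i.succ) 1 =
      -Pi.single (Sum.inr i.castSucc) 1 := by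
  ext a
  rcases a with a | a
  · simp [genSpMatrix, regularNilpotent]
  · simp [genSpMatrix, regularNilpotent, Pi.single_apply, Fin.ext_iff, eq_comm]

lemma regularNilpotent_pow_mulVec (i : Fin (m + 1)) :
    genSpMatrix (m + 1) (regularNilpotent m R) ^ (i : ℕ) *ᵥ Pi.single (Sum.inl 0) 1 =
      Pi.single (Sum.inl i) 1 := by
  induction i using Fin.induction with
  | zero => rw [Fin.val_zero, pow_zero, one_mulVec]
  | succ i ih =>
    rw [Fin.val_succ, pow_succ', ← mulVec_mulVec, ← Fin.val_castSucc, ih,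
      regularNilpotent_mulVec_inl_castSucc]

lemma regularNilpotent_pow_add_mulVec (i : Fin (m + 1)) :
    genSpMatrix (m + 1) (regularNilpotent m R) ^ (m + 1 + i : ℕ) *ᵥ Pi.single (Sum.inl 0) 1 =
      (-1 : R) ^ (i : ℕ) • Pi.single (Sum.inr i.rev) 1 := by
  induction i using Fin.induction with
  | zero =>
    have h := regularNilpotent_pow_mulVec (R := R) (Fin.last m)
    rw [Fin.val_last] at h
    rw [Fin.val_zero, add_zero, pow_succ', ← mulVec_mulVec, h,
      regularNilpotent_mulVec_inl_last, Fin.rev_zero, pow_zero, one_smul]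
  | succ i ih =>
    rw [Fin.val_succ, ← add_assoc, pow_succ', ← mulVec_mulVec, ← Fin.val_castSucc i, ih,
      mulVec_smul, Fin.rev_castSucc, regularNilpotent_mulVec_inr_succ, Fin.rev_succ, pow_succ,
      mul_neg_one, neg_smul, smul_neg]

lemma transpose_krylovMatrix_regularNilpotent_mul_self :
    letI K := krylovMatrix (genSpMatrix (m + 1) (regularNilpotent m R)) (Pi.single (Sum.inl 0) 1)
      (m + 1 + (m + 1))
    Kᵀ * K = 1 := by
  set K := krylovMatrix (genSpMatrix (m + 1) (regularNilpotent m R)) (Pi.single (Sum.inl 0) 1)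
    (m + 1 + (m + 1))
  have castAdd_col (i : Fin (m + 1)) :
      K.col (Fin.castAdd (m + 1) i) = Pi.single (Sum.inl i) 1 :=
    regularNilpotent_pow_mulVec i
  have natAdd_col (i : Fin (m + 1)) :
      K.col (Fin.natAdd (m + 1) i) = (-1 : R) ^ (i : ℕ) • Pi.single (Sum.inr i.rev) 1 :=
    regularNilpotent_pow_add_mulVec i
  have castAdd_ne_natAdd (i i' : Fin (m + 1)) : Fin.castAdd (m + 1) i ≠ Fin.natAdd (m + 1) i' :=
    fun h => absurd (congrArg Fin.val h) (by rw [Fin.val_castAdd, Fin.val_natAdd]; lia)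
  ext j k
  change K.col j ⬝ᵥ K.col k = _
  refine Fin.addCases (fun i => ?_) (fun i => ?_) j <;>
    refine Fin.addCases (fun i' => ?_) (fun i' => ?_) k
  · simp [castAdd_col, Pi.single_apply, one_apply, eq_comm]
  · rw [castAdd_col, natAdd_col, one_apply_ne (castAdd_ne_natAdd i i')]
    simp
  · rw [castAdd_col, natAdd_col, one_apply_ne (castAdd_ne_natAdd i' i).symm]
    simp
  · rw [natAdd_col, natAdd_col]
    rcases eq_or_ne i i' with rfl | h
    · simp [← mul_pow]
    · simp [one_apply, h, h.symm]

end RegularNilpotent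

section Injectivity

lemma krylovMatrix_map {ι R S : Type*} [Fintype ι] [DecidableEq ι] [CommRing R] [CommRing S]
    (φ : R →+* S) (M : Matrix ι ι R) (c : ι → R) (m : ℕ) :
    krylovMatrix (M.map φ) (φ ∘ c) m = (krylovMatrix M c m).map φ := by
  ext a k
  simp only [krylovMatrix, of_apply, map_apply, RingHom.map_mulVec]
  rw [← RingHom.mapMatrix_apply φ M, ← map_pow, RingHom.mapMatrix_apply]

lemma exists_mul_eq_one_of_map {ι κ R S : Type*} [Fintype ι] [Finite κ] [DecidableEq κ]
    [CommRing R] [CommRing S] {φ : R →+* S} [IsLocalHom φ] (hφ : Function.Surjective φ)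
    {K : Matrix ι κ R} {L₀ : Matrix κ ι S} (h : L₀ * K.map φ = 1) :
    ∃ L : Matrix κ ι R, L * K = 1 := by
  cases nonempty_fintype κ
  obtain ⟨L, rfl⟩ : ∃ L : Matrix κ ι R, L.map φ = L₀ :=
    ⟨L₀.map (Function.surjInv hφ), by ext; exact Function.surjInv_eq hφ _⟩
  have isUnit_det : IsUnit (L * K).det := by
    refine IsUnit.of_map φ _ ?_
    rw [RingHom.map_det, RingHom.mapMatrix_apply, Matrix.map_mul, h, det_one]
    exact isUnit_one
  exact ⟨(L * K)⁻¹ * L, by rw [Matrix.mul_assoc, nonsing_inv_mul _ isUnit_det]⟩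

lemma isLocalHom_constantCoeff {σ R : Type*} [CommRing R] :
    IsLocalHom (MvPowerSeries.constantCoeff (σ := σ) (R := R)) :=
  ⟨fun _ => MvPowerSeries.isUnit_iff_constantCoeff.mpr⟩

lemma aeval_X_add_C_injective {σ R : Type*} [CommRing R] (a : σ → R) :
    Function.Injective (aeval (R := R) fun s => (X s + C (a s) : MvPolynomial σ R)) := by
  have comp_eq_id : (aeval fun s => (X s - C (a s) : MvPolynomial σ R)).comp
      (aeval fun s => (X s + C (a s) : MvPolynomial σ R)) = AlgHom.id R _ := by
    ext s
    simp
  exact Function.LeftInverse.injective (g := aeval fun s => (X s - C (a s) : MvPolynomial σ R))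
    fun p => by rw [← AlgHom.comp_apply, comp_eq_id, AlgHom.id_apply]

/-- The formal neighbourhood of a point `a` of affine space: the generic point with coordinates
`a s + X s` in the power series ring. -/
noncomputable def formalPoint {σ R : Type*} [CommRing R] (a : σ → R) : σ → MvPowerSeries σ R :=
  fun s => MvPowerSeries.X s + MvPowerSeries.C (a s)

lemma constantCoeff_comp_formalPoint {σ R : Type*} [CommRing R] (a : σ → R) :
    MvPowerSeries.constantCoeff ∘ formalPoint a = a := by
  ext s
  simp [formalPoint]

lemma aeval_formalPoint_injective {σ R : Type*} [CommRing R] (a : σ → R) :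
    Function.Injective (aeval (formalPoint a) : MvPolynomial σ R → MvPowerSeries σ R) := by
  have aeval_eq : (aeval (formalPoint a) : MvPolynomial σ R →ₐ[R] MvPowerSeries σ R) =
      (MvPolynomial.coeToMvPowerSeries.algHom R).comp (aeval fun s => X s + C (a s)) := by
    ext s
    simp [formalPoint]
  have algHom_injective :
      Function.Injective (MvPolynomial.coeToMvPowerSeries.algHom R : MvPolynomial σ R → _) := by
    intro p q h
    simpa using h
  rw [aeval_eq, AlgHom.coe_comp]
  exact algHom_injective.comp (aeval_X_add_C_injective a)

lemma exists_mul_krylovMatrix_formalPoint_eq_one (m : ℕ) (R : Type*) [CommRing R] :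
    ∃ L : Matrix (Fin (m + 1 + (m + 1))) (Fin (m + 1) ⊕ Fin (m + 1))
        (MvPowerSeries (SpCoord (m + 1)) R),
      L * krylovMatrix (genSpMatrix (m + 1) (formalPoint (regularNilpotent m R)))
        (Pi.single (Sum.inl 0) 1) (m + 1 + (m + 1)) = 1 := by
  let φ : MvPowerSeries (SpCoord (m + 1)) R →+* R := MvPowerSeries.constantCoeff
  have : IsLocalHom φ := isLocalHom_constantCoeff
  have φ_surjective : Function.Surjective φ :=
    fun a => ⟨MvPowerSeries.C a, MvPowerSeries.constantCoeff_C a⟩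
  have φ_single :
      φ ∘ (Pi.single (Sum.inl 0) 1 : Fin (m + 1) ⊕ Fin (m + 1) → _) = Pi.single (Sum.inl 0) 1 := by
    ext a
    simp [Pi.single_apply, apply_ite φ]
  refine exists_mul_eq_one_of_map φ_surjective (L₀ := (krylovMatrix (genSpMatrix (m + 1)
    (regularNilpotent m R)) (Pi.single (Sum.inl 0) 1) (m + 1 + (m + 1)))ᵀ) ?_
  rw [← krylovMatrix_map, ← genSpMatrix_comp, constantCoeff_comp_formalPoint, φ_single]
  exact transpose_krylovMatrix_regularNilpotent_mul_self

namespace IsSpInvariant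

variable {A : Type u} [CommRing A]

lemma aeval_eq_aeval_of_mul_krylovMatrix_eq_one {S : Type u} [CommRing S] [Algebra A S] {n : ℕ}
    {f g : MvPolynomial (SpCoord n) A} (hf : IsSpInvariant f) (hg : IsSpInvariant g)
    (h : restrictToTorus f = restrictToTorus g) {v : SpCoord n → S} {c : Fin n ⊕ Fin n → S}
    {L : Matrix (Fin (n + n)) (Fin n ⊕ Fin n) S}
    (hL : L * krylovMatrix (genSpMatrix n v) c (n + n) = 1) : aeval v f = aeval v g := by
  nontriviality S
  obtain ⟨R, _, φ, φ_injective, t, hχ⟩ := exists_charpoly_genSpMatrix_comp_eq_prod v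
  let _ : Algebra A R := (φ.comp (algebraMap A S)).toAlgebra
  let φA : S →ₐ[A] R := { φ with commutes' := fun _ => rfl }
  have hLφ : L.map φ * krylovMatrix (genSpMatrix n (φ ∘ v)) (φ ∘ c) (n + n) = 1 := by
    rw [genSpMatrix_comp, krylovMatrix_map, ← Matrix.map_mul, hL,
      Matrix.map_one _ φ.map_zero φ.map_one]
  have map_aeval (p : MvPolynomial (SpCoord n) A) : φ (aeval v p) = aeval (φ ∘ v) p :=
    comp_aeval_apply v φA p
  apply φ_injective
  rw [map_aeval, map_aeval, hf.aeval_eq_aeval_restrictToTorus hχ hLφ,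
    hg.aeval_eq_aeval_restrictToTorus hχ hLφ, h]

theorem eq_of_restrictToTorus_eq {m : ℕ} {f g : MvPolynomial (SpCoord (m + 1)) A}
    (hf : IsSpInvariant f) (hg : IsSpInvariant g) (h : restrictToTorus f = restrictToTorus g) :
    f = g := by
  obtain ⟨L, hL⟩ := exists_mul_krylovMatrix_formalPoint_eq_one m A
  exact aeval_formalPoint_injective _ (hf.aeval_eq_aeval_of_mul_krylovMatrix_eq_one hg h hL)

end IsSpInvariant

end Injectivity

section TwoTorsion

variable {A : Type u} [CommRing A] {n : ℕ}

/-- The point of `sp_{2n}` with matrix `[[a E, b E], [c E, -a E]]`, where `E` is the idempotent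
matrix unit at position `(o, o)`: the image of `[[a, b], [c, -a]]` under a long-root embedding of
`sp₂` into `sp_{2n}`. -/
def longRootPoint {R : Type*} [CommRing R] (o : Fin n) (a b c : R) : SpCoord n → R
  | Sum.inl (i, j) => if i = o ∧ j = o then a else 0
  | Sum.inr (Sum.inl s) => if s = s(o, o) then b else 0
  | Sum.inr (Sum.inr s) => if s = s(o, o) then c else 0

lemma genSpMatrix_longRootPoint {R : Type*} [CommRing R] (o : Fin n) (a b c : R) :
    genSpMatrix n (longRootPoint o a b c) =
      fromBlocks (single o o a) (single o o b) (single o o c) (-single o o a) := by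
  unfold genSpMatrix
  congr 1 <;> ext i j <;> simp [longRootPoint, single_apply, eq_comm, and_comm]

lemma comp_longRootPoint {R S : Type*} [CommRing R] [CommRing S] (φ : R →+* S) (o : Fin n)
    (a b c : R) : φ ∘ longRootPoint o a b c = longRootPoint o (φ a) (φ b) (φ c) := by
  ext (_ | _ | _) <;> simp [longRootPoint, apply_ite φ]

lemma isBorelPoint_longRootPoint {R : Type*} [CommRing R] (o : Fin n) (a b : R) :
    IsBorelPoint (longRootPoint o a b 0) := by
  refine ⟨fun i j hij => if_neg ?_, fun s => ite_self 0⟩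
  rintro ⟨rfl, rfl⟩
  exact lt_irrefl _ hij

lemma fromBlocks_one_zero_one_mem_symplecticGroup {l R : Type*} [Fintype l] [DecidableEq l]
    [CommRing R] {S : Matrix l l R} (hS : S.IsSymm) :
    fromBlocks 1 0 S 1 ∈ symplecticGroup l R :=
  SymplecticGroup.fromBlocks_mem_iff.2 ⟨by simp [hS.eq], by simp, by simp⟩

namespace IsSpInvariant

variable {f : MvPolynomial (SpCoord n) A}

lemma aeval_longRootPoint_sq (hf : IsSpInvariant f) {R : Type u} [CommRing R] [Algebra A R]
    (o : Fin n) (x : R) :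
    aeval (longRootPoint o 0 1 (x ^ 2)) f = aeval (Pi.single o x) (restrictToTorus f) := by
  have conj : aeval (longRootPoint o 0 1 (x ^ 2)) f = aeval (longRootPoint o x 1 0) f := by
    refine hf.aeval_eq_of_mul_eq_mul (P := fromBlocks 1 0 (single o o x) 1)
      (fromBlocks_one_zero_one_mem_symplecticGroup (transpose_single o o x)) ?_
    simp [genSpMatrix_longRootPoint, fromBlocks_multiply, pow_two]
  rw [conj, hf.aeval_eq_of_isBorelPoint (isBorelPoint_longRootPoint o x 1)]
  congr 2
  ext i
  simp [longRootPoint, Pi.single_apply]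

lemma exists_aeval_single_restrictToTorus_eq_expand (hf : IsSpInvariant f) (o : Fin n) :
    ∃ g : A[X], aeval (Pi.single o Polynomial.X) (restrictToTorus f) = Polynomial.expand A 2 g := by
  refine ⟨aeval (longRootPoint o 0 1 Polynomial.X) f, ?_⟩
  rw [comp_aeval_apply, ← hf.aeval_longRootPoint_sq]
  change _ = aeval (⇑(Polynomial.expand A 2 : A[X] →+* A[X]) ∘ _) f
  rw [comp_longRootPoint]
  simp

end IsSpInvariant

lemma isHyperoctahedralInvariant_C_mul_sum_X {x : A} (hx : 2 * x = 0) :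
    IsHyperoctahedralInvariant (C x * ∑ i : Fin n, X i) := by
  refine ⟨fun σ => ?_, fun i => ?_⟩
  · simp only [map_mul, rename_C, map_sum, rename_X]
    rw [Equiv.sum_comp σ (X : Fin n → MvPolynomial (Fin n) A)]
  · have C_mul_neg (q : MvPolynomial (Fin n) A) : C x * -q = C x * q := by
      have : (2 : MvPolynomial (Fin n) A) * C x = 0 := by
        rw [← map_ofNat C 2, ← map_mul, hx, map_zero]
      linear_combination -q * this
    simp only [map_mul, map_sum, algHom_C, algebraMap_eq, aeval_X, Finset.mul_sum]
    refine Finset.sum_congr rfl fun l _ => ?_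
    split_ifs
    · exact C_mul_neg _
    · rfl

theorem eq_zero_of_two_mul_eq_zero_of_surjective {m : ℕ}
    (h : ∀ p : MvPolynomial (Fin (m + 1)) A, IsHyperoctahedralInvariant p →
      ∃ f : MvPolynomial (SpCoord (m + 1)) A, IsSpInvariant f ∧ restrictToTorus f = p)
    {x : A} (hx : 2 * x = 0) : x = 0 := by
  obtain ⟨f, hf, hfx⟩ := h _ (isHyperoctahedralInvariant_C_mul_sum_X hx)
  obtain ⟨g, hg⟩ := hf.exists_aeval_single_restrictToTorus_eq_expand 0
  have C_mul_X_eq : Polynomial.C x * Polynomial.X = Polynomial.expand A 2 g := by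
    rw [← hg, hfx]
    simp
  simpa [Polynomial.coeff_expand] using congrArg (Polynomial.coeff · 1) C_mul_X_eq

end TwoTorsion

section Surjectivity

lemma coeff_aeval_C_mul_X {σ R : Type*} [CommRing R] (c : σ → R) (p : MvPolynomial σ R)
    (d : σ →₀ ℕ) :
    coeff d (aeval (fun i => (C (c i) * X i : MvPolynomial σ R)) p) =
      (d.prod fun i k => c i ^ k) * coeff d p := by
  classical
  induction p using MvPolynomial.induction_on' with
  | add p q hp hq => rw [map_add, coeff_add, coeff_add, hp, hq, mul_add]
  | monomial e a =>
    have aeval_monomial_eq : aeval (fun i => (C (c i) * X i : MvPolynomial σ R)) (monomial e a) =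
        monomial e ((e.prod fun i k => c i ^ k) * a) := by
      simp only [aeval_monomial, mul_pow, Finsupp.prod_mul, ← C_pow, algebraMap_eq]
      rw [monomial_eq, C_mul, map_finsuppProd]
      ring
    rw [aeval_monomial_eq, coeff_monomial, coeff_monomial]
    split_ifs with h
    · rw [h]
    · rw [mul_zero]

lemma exists_expand_eq {σ R : Type*} [CommSemiring R] {k : ℕ} {p : MvPolynomial σ R}
    (hp : ∀ d ∈ p.support, ∀ i, k ∣ d i) : ∃ q, expand k q = p := by
  refine ⟨∑ d ∈ p.support, monomial (d.mapRange (· / k) (Nat.zero_div k)) (coeff d p), ?_⟩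
  rw [map_sum]
  conv_rhs => rw [p.as_sum]
  refine Finset.sum_congr rfl fun d hd => ?_
  have smul_div : k • d.mapRange (· / k) (Nat.zero_div k) = d := by
    ext i
    simp [Nat.mul_div_cancel' (hp d hd i)]
  rw [expand_monomial, smul_div]

variable {A : Type u} [CommRing A] {n : ℕ}

namespace IsHyperoctahedralInvariant

variable {p : MvPolynomial (Fin n) A}

lemma two_dvd_of_mem_support (hp : IsHyperoctahedralInvariant p)
    (h2 : ∀ x : A, 2 * x = 0 → x = 0) {d : Fin n →₀ ℕ} (hd : d ∈ p.support) (i : Fin n) :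
    2 ∣ d i := by
  have coeff_eq : (-1) ^ d i * coeff d p = coeff d p := by
    have sign_eq : (fun l => if l = i then -(X l : MvPolynomial (Fin n) A) else X l) =
        fun l => C (if l = i then -1 else 1) * X l := by
      ext1 l
      split_ifs <;> simp
    conv_rhs => rw [← hp.2 i, sign_eq, coeff_aeval_C_mul_X, Finsupp.prod_fintype _ _ (by simp)]
    simp [ite_pow]
  by_contra h
  rw [← even_iff_two_dvd, Nat.not_even_iff_odd] at h
  rw [h.neg_one_pow] at coeff_eq
  exact mem_support_iff.1 hd (h2 _ (by linear_combination -coeff_eq))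

lemma exists_aeval_expand_esymm_eq (hp : IsHyperoctahedralInvariant p)
    (h2 : ∀ x : A, 2 * x = 0 → x = 0) :
    ∃ g : MvPolynomial (Fin n) A,
      aeval (fun i : Fin n => expand 2 (esymm (Fin n) A (i + 1))) g = p := by
  obtain ⟨q, rfl⟩ := exists_expand_eq fun d hd => hp.two_dvd_of_mem_support h2 hd
  have q_symmetric : q.IsSymmetric := fun σ =>
    expand_injective two_pos (by rw [← rename_expand, hp.1 σ])
  obtain ⟨g, hg⟩ := esymmAlgHom_fin_surjective A le_rfl ⟨q, q_symmetric⟩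
  refine ⟨g, ?_⟩
  rw [← comp_aeval_apply, ← esymmAlgHom_apply, hg]

end IsHyperoctahedralInvariant

/-- The coefficient of `X ^ (2 * (n - k))` in the characteristic polynomial of the matrix with
coordinates `v`, with the sign for which it restricts to the `k`-th elementary symmetric polynomial
in the squares of the torus coordinates. Meaningful for `k ≤ n` only. -/
noncomputable def evenCharpolyCoeff {R : Type*} [CommRing R] (v : SpCoord n → R) (k : ℕ) : R :=
  (-1) ^ k * (genSpMatrix n v).charpoly.coeff (2 * (n - k))

lemma map_evenCharpolyCoeff {R S : Type*} [CommRing R] [CommRing S] (φ : R →+* S)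
    (v : SpCoord n → R) (k : ℕ) : φ (evenCharpolyCoeff v k) = evenCharpolyCoeff (φ ∘ v) k := by
  simp only [evenCharpolyCoeff, genSpMatrix_comp, charpoly_map, Polynomial.coeff_map, map_mul,
    map_pow, map_neg, map_one]

lemma aeval_aeval_evenCharpolyCoeff_X {R : Type*} [CommRing R] [Algebra A R] (v : SpCoord n → R)
    (g : MvPolynomial (Fin n) A) :
    aeval v (aeval
      (fun i : Fin n => evenCharpolyCoeff (X : SpCoord n → MvPolynomial _ A) (i + 1)) g) =
      aeval (fun i : Fin n => evenCharpolyCoeff v (i + 1)) g := by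
  have map_eq (k : ℕ) : aeval v (evenCharpolyCoeff (X : SpCoord n → MvPolynomial _ A) k) =
      evenCharpolyCoeff v k := by
    refine (map_evenCharpolyCoeff (aeval v : MvPolynomial _ A →ₐ[A] R).toRingHom X k).trans ?_
    congr 1
    ext s
    exact aeval_X v s
  simp only [comp_aeval_apply, map_eq]

lemma isSpInvariant_aeval_evenCharpolyCoeff (g : MvPolynomial (Fin n) A) :
    IsSpInvariant (aeval
      (fun i : Fin n => evenCharpolyCoeff (X : SpCoord n → MvPolynomial _ A) (i + 1)) g) := by
  intro R _ _ P hP v w hw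
  obtain ⟨P, rfl⟩ : IsUnit P := (isUnit_iff_isUnit_det P).2
    (SymplecticGroup.symplectic_det (mem_symplecticGroup_iff_neg_J.2 hP))
  simp only [aeval_aeval_evenCharpolyCoeff_X]
  simp only [evenCharpolyCoeff, hw, charpoly_units_conj]

lemma charpoly_genSpMatrix_torusPoint {R : Type*} [CommRing R] (t : Fin n → R) :
    (genSpMatrix n (torusPoint t)).charpoly =
      Polynomial.expand R 2 (∏ i, (Polynomial.X - Polynomial.C (t i ^ 2))) := by
  rw [genSpMatrix_torusPoint, charpoly_fromBlocks_zero₁₂, diagonal_neg, charpoly_diagonal,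
    charpoly_diagonal, ← Finset.prod_mul_distrib, map_prod]
  refine Finset.prod_congr rfl fun i _ => ?_
  simp
  ring

lemma evenCharpolyCoeff_torusPoint {R : Type*} [CommRing R] [Algebra A R] (t : Fin n → R) {k : ℕ}
    (hk : k ≤ n) :
    evenCharpolyCoeff (torusPoint t) k = aeval (fun i => t i ^ 2) (esymm (Fin n) A k) := by
  have vieta := Multiset.prod_X_sub_C_coeff (Finset.univ.val.map fun i => t i ^ 2) (k := n - k)
    (by simp)
  rw [Multiset.map_map, Multiset.card_map, Finset.card_val, Finset.card_univ, Fintype.card_fin,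
    Nat.sub_sub_self hk] at vieta
  rw [evenCharpolyCoeff, charpoly_genSpMatrix_torusPoint, mul_comm 2,
    Polynomial.coeff_expand_mul two_pos, aeval_esymm_eq_multiset_esymm]
  refine (congrArg _ vieta).trans ?_
  rw [← mul_assoc, ← mul_pow, neg_one_mul, neg_neg, one_pow, one_mul]

theorem exists_isSpInvariant_restrictToTorus_eq (h2 : ∀ x : A, 2 * x = 0 → x = 0)
    {p : MvPolynomial (Fin n) A} (hp : IsHyperoctahedralInvariant p) :
    ∃ f : MvPolynomial (SpCoord n) A, IsSpInvariant f ∧ restrictToTorus f = p := by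
  obtain ⟨g, rfl⟩ := hp.exists_aeval_expand_esymm_eq h2
  refine ⟨_, isSpInvariant_aeval_evenCharpolyCoeff g, ?_⟩
  rw [restrictToTorus_eq_aeval_torusPoint, aeval_aeval_evenCharpolyCoeff_X]
  congr 2
  funext i
  rw [evenCharpolyCoeff_torusPoint (A := A) X i.isLt, ← aeval_X_left_apply (expand 2 _),
    aeval_expand]
  rfl

end Surjectivity

/-- Let `A` be a commutative ring with `2`-torsion ideal `A[2]` and
`n ≥ 1`.  Restriction `ρ` of `Sp_{2n}`-invariant polynomials on `sp_{2n}` to the diagonal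
torus is injective, lands in the `W`-invariants for the hyperoctahedral Weyl group `W`,
and is onto the full ring of `W`-invariants if and only if `A[2] = 0`: the Chevalley
morphism `𝔱/W → sp_{2n}/Sp_{2n}` is an isomorphism iff `A` has no `2`-torsion. -/
theorem statement15 {A : Type u} [CommRing A] (n : ℕ) (hn : 1 ≤ n) :
    (∀ f g : MvPolynomial (SpCoord n) A, IsSpInvariant f → IsSpInvariant g →
      restrictToTorus f = restrictToTorus g → f = g) ∧
    (∀ f : MvPolynomial (SpCoord n) A, IsSpInvariant f →
      IsHyperoctahedralInvariant (restrictToTorus f)) ∧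
    ((∀ p : MvPolynomial (Fin n) A, IsHyperoctahedralInvariant p →
        ∃ f : MvPolynomial (SpCoord n) A, IsSpInvariant f ∧ restrictToTorus f = p) ↔
      (∀ x : A, 2 * x = 0 → x = 0)) := by
  obtain ⟨m, rfl⟩ := Nat.exists_eq_add_of_le' hn
  refine ⟨fun f g hf hg h => hf.eq_of_restrictToTorus_eq hg h,
    fun f hf => hf.isHyperoctahedralInvariant_restrictToTorus, fun h x hx => ?_, fun h2 p hp => ?_⟩
  · exact eq_zero_of_two_mul_eq_zero_of_surjective h hx
  · exact exists_isSpInvariant_restrictToTorus_eq h2 hp
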